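/- Suppose (q_a)_{a∈I} is a quasipolynomial solution of the Q-system such that each q_a has degree e_a ≥ 1 with constant leading coefficient c_a > 0. Then for every a ∈ I the leading coefficients satisfy e_a · c_a² = Π_{b : C(a,b)<0} ( c_b · (C(b,a)/C(a,b))^{e_b} )^{−C(a,b)}, an identity of positive real numbers (note C(b,a)/C(a,b) > 0 whenever C(a,b) < 0). -/

import Mathlib

/-!
Compare `log q_a` with `log m`. Since `q_a ~ c_a m ^ e_a`, the difference `log q_a - e_a log m`
converges. By the Q-system, `q_a(m)² - q_a(m+1) q_a(m-1) ~ K m ^ D`, where `K > 0` is the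
right-hand side of the claim, so the second difference of `log q_a` is asymptotic to
`-(K / c_a²) m ^ (D - 2e_a)` while that of `log m` is asymptotic to `-m ^ (-2)`. If the former
were eventually at most `A` times the latter, then `log q_a - A log m` would be eventually
concave with slopes tending to `0`, hence eventually nondecreasing, forcing `A ≤ e_a`; likewise
with the inequalities reversed. So the quotient `(K / c_a²) m ^ (D - 2e_a + 2)` of the second
differences can neither tend to `0` nor to `∞`: the exponent vanishes, and `K / c_a² = e_a`.
-/

open Filter Asymptotics
open scoped Topology fwdDiff

theorem eventually_ge_of_tendsto_of_eventually_succ_le {α : Type*} [TopologicalSpace α]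
    [Preorder α] [ClosedIicTopology α] {f : ℕ → α} {a : α}
    (hf : Tendsto f atTop (𝓝 a)) (h : ∀ᶠ n in atTop, f (n + 1) ≤ f n) :
    ∀ᶠ n in atTop, a ≤ f n := by
  obtain ⟨N, hN⟩ := eventually_atTop.1 h
  filter_upwards [eventually_ge_atTop N] with n hn
  refine le_of_tendsto hf ?_
  filter_upwards [eventually_ge_atTop n] with m hm
  exact antitoneOn_nat_Ici_of_succ_le hN hn (hn.trans hm) hm

theorem not_tendsto_atBot_of_eventually_le_succ {α : Type*} [Preorder α] [NoMinOrder α]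
    {f : ℕ → α} (h : ∀ᶠ n in atTop, f n ≤ f (n + 1)) : ¬ Tendsto f atTop atBot := by
  obtain ⟨N, hN⟩ := eventually_atTop.1 h
  intro hbot
  obtain ⟨n, hlt, hn⟩ := ((hbot.eventually_lt_atBot (f N)).and (eventually_ge_atTop N)).exists
  exact (monotoneOn_nat_Ici_of_le_succ hN Set.self_mem_Ici hn hn).not_gt hlt

theorem tendsto_fwdDiff_zero {G : Type*} [AddCommGroup G] [TopologicalSpace G]
    [IsTopologicalAddGroup G] {f : ℕ → G} {b : G} (hf : Tendsto f atTop (𝓝 b)) :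
    Tendsto (Δ_[1] f) atTop (𝓝 0) := by
  simpa using! (hf.comp (tendsto_add_atTop_nat 1)).sub hf

section Comparison

variable {g φ : ℕ → ℝ} {e A b : ℝ}

theorem tendsto_fwdDiff_zero_of_tendsto_sub_smul (hφ : Tendsto (Δ_[1] φ) atTop (𝓝 0))
    (hg : Tendsto (g - e • φ) atTop (𝓝 b)) : Tendsto (Δ_[1] g) atTop (𝓝 0) := by
  have h : Tendsto (Δ_[1] (g - e • φ) + e • Δ_[1] φ) atTop (𝓝 (0 + e • 0)) :=
    (tendsto_fwdDiff_zero hg).add (hφ.const_smul e)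
  rwa [← fwdDiff_const_smul, ← fwdDiff_add, sub_add_cancel, smul_zero, add_zero] at h

-- The slopes of `g` decrease to `0`, so they are nonnegative: `g` cannot tend to `-∞`.
theorem nonneg_of_fwdDiff_fwdDiff_nonpos (hφ : Tendsto φ atTop atTop)
    (hΔφ : Tendsto (Δ_[1] φ) atTop (𝓝 0)) (hg : Tendsto (g - e • φ) atTop (𝓝 b))
    (h : ∀ᶠ n in atTop, Δ_[1] (Δ_[1] g) n ≤ 0) : 0 ≤ e := by
  have hΔg : ∀ᶠ n in atTop, 0 ≤ Δ_[1] g n :=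
    eventually_ge_of_tendsto_of_eventually_succ_le (tendsto_fwdDiff_zero_of_tendsto_sub_smul hΔφ hg)
      (h.mono fun _ => sub_nonpos.1)
  by_contra! he
  have hg_bot : Tendsto (g - e • φ + e • φ) atTop atBot :=
    hg.add_atBot (hφ.const_mul_atTop_of_neg he)
  rw [sub_add_cancel] at hg_bot
  exact not_tendsto_atBot_of_eventually_le_succ (hΔg.mono fun _ => sub_nonneg.1) hg_bot

theorem le_of_fwdDiff_fwdDiff_le (hφ : Tendsto φ atTop atTop)
    (hΔφ : Tendsto (Δ_[1] φ) atTop (𝓝 0)) (hg : Tendsto (g - e • φ) atTop (𝓝 b))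
    (h : ∀ᶠ n in atTop, Δ_[1] (Δ_[1] g) n ≤ A * Δ_[1] (Δ_[1] φ) n) : A ≤ e := by
  rw [← sub_nonneg]
  refine nonneg_of_fwdDiff_fwdDiff_nonpos (g := g - A • φ) hφ hΔφ (b := b) ?_ ?_
  · rwa [show g - A • φ - (e - A) • φ = g - e • φ by module]
  · filter_upwards [h] with n hn
    simp only [fwdDiff, Pi.sub_apply, Pi.smul_apply, smul_eq_mul] at hn ⊢
    linarith

theorem le_of_le_fwdDiff_fwdDiff (hφ : Tendsto φ atTop atTop)
    (hΔφ : Tendsto (Δ_[1] φ) atTop (𝓝 0)) (hg : Tendsto (g - e • φ) atTop (𝓝 b))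
    (h : ∀ᶠ n in atTop, A * Δ_[1] (Δ_[1] φ) n ≤ Δ_[1] (Δ_[1] g) n) : e ≤ A := by
  rw [← sub_nonneg]
  refine nonneg_of_fwdDiff_fwdDiff_nonpos (g := A • φ - g) hφ hΔφ (b := -b) ?_ ?_
  · rw [show A • φ - g - (A - e) • φ = -(g - e • φ) by module]
    exact hg.neg
  · filter_upwards [h] with n hn
    simp only [fwdDiff, Pi.sub_apply, Pi.smul_apply, smul_eq_mul] at hn ⊢
    linarith

end Comparison

theorem isEquivalent_exp_sub_one : (fun t : ℝ => Real.exp t - 1) ~[𝓝 0] fun t => t := by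
  simpa [IsEquivalent, Pi.sub_def] using (Real.hasDerivAt_exp 0).isLittleO

theorem tendsto_fwdDiff_log_natCast :
    Tendsto (Δ_[1] (Real.log ∘ ((↑) : ℕ → ℝ))) atTop (𝓝 0) :=
  Real.tendsto_log_nat_add_one_sub_log.congr fun n => by simp [fwdDiff]

theorem isEquivalent_fwdDiff_fwdDiff_log {u : ℕ → ℝ} (hu : ∀ᶠ n in atTop, 0 < u n)
    (hΔ : Tendsto (Δ_[1] (Real.log ∘ u)) atTop (𝓝 0)) :
    Δ_[1] (Δ_[1] (Real.log ∘ u)) ~[atTop]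
      fun n => (u n * u (n + 2) - u (n + 1) ^ 2) / u (n + 1) ^ 2 := by
  refine IsEquivalent.symm ((isEquivalent_exp_sub_one.comp_tendsto
    (tendsto_fwdDiff_zero hΔ)).congr_left ?_)
  filter_upwards [hu, (tendsto_add_atTop_nat 1).eventually hu,
    (tendsto_add_atTop_nat 2).eventually hu] with n h₀ h₁ h₂
  have hlog : Δ_[1] (Δ_[1] (Real.log ∘ u)) n = Real.log (u n * u (n + 2) / u (n + 1) ^ 2) := by
    rw [Real.log_div (by positivity) (by positivity), Real.log_mul h₀.ne' h₂.ne', Real.log_pow]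
    simp only [fwdDiff, Function.comp_apply]
    push_cast
    ring
  rw [Function.comp_apply, hlog, Real.exp_log (by positivity), sub_div, div_self (by positivity)]

theorem isEquivalent_fwdDiff_fwdDiff_log_natCast :
    Δ_[1] (Δ_[1] (Real.log ∘ ((↑) : ℕ → ℝ))) ~[atTop] fun n => -1 / ((n + 1 : ℕ) : ℝ) ^ 2 := by
  have h := isEquivalent_fwdDiff_fwdDiff_log (u := ((↑) : ℕ → ℝ))
    (tendsto_natCast_atTop_atTop.eventually_gt_atTop 0)
    tendsto_fwdDiff_log_natCast
  refine h.congr_right (.of_forall fun n => ?_)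
  push_cast
  ring_nf

theorem tendsto_log_sub_smul_log {u : ℕ → ℝ} {c e : ℝ} (hc : 0 < c)
    (hu : u ~[atTop] fun n => c * (n : ℝ) ^ e) :
    Tendsto (Real.log ∘ u - e • (Real.log ∘ ((↑) : ℕ → ℝ))) atTop (𝓝 (Real.log c)) := by
  have hn : ∀ᶠ n : ℕ in atTop, (0 : ℝ) < n :=
    tendsto_natCast_atTop_atTop.eventually_gt_atTop 0
  have hratio : Tendsto (fun n => u n / (n : ℝ) ^ e) atTop (𝓝 c) := by
    refine IsEquivalent.tendsto_const ((hu.div IsEquivalent.refl).congr_right ?_)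
    filter_upwards [hn] with n hn
    exact mul_div_cancel_right₀ c (Real.rpow_pos_of_pos hn e).ne'
  refine ((Real.continuousAt_log hc.ne').tendsto.comp hratio).congr' ?_
  filter_upwards [hn, hratio.eventually_ne hc.ne'] with n hn hne
  have hun : u n ≠ 0 := fun h => hne (by rw [h, zero_div])
  simp only [Function.comp_apply, Pi.sub_apply, Pi.smul_apply, smul_eq_mul]
  rw [Real.log_div hun (Real.rpow_pos_of_pos hn e).ne', Real.log_rpow hn]

theorem eq_of_isEquivalent_const_mul_rpow {ι : Type*} {l : Filter ι} [l.NeBot] {r x : ι → ℝ}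
    {κ δ e : ℝ} (hx : Tendsto x l atTop) (hκ : 0 < κ) (he : 0 < e)
    (hr : r ~[l] fun i => κ * x i ^ δ) (hle : ∀ A, (∀ᶠ i in l, A ≤ r i) → A ≤ e)
    (hge : ∀ A, (∀ᶠ i in l, r i ≤ A) → e ≤ A) : κ = e := by
  rcases lt_trichotomy δ 0 with hδ | rfl | hδ
  · have hr₀ : Tendsto r l (𝓝 0) := by
      refine hr.symm.tendsto_nhds ?_
      simpa using ((tendsto_rpow_neg_atTop (neg_pos.2 hδ)).comp hx).const_mul κ
    linarith [hge (e / 2) (hr₀.eventually_le_const (half_pos he))]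
  · have hrκ : Tendsto r l (𝓝 κ) := IsEquivalent.tendsto_const (by simpa using! hr)
    refine le_antisymm (le_of_forall_lt fun A hA => ?_) (le_of_forall_gt fun A hA => ?_)
    · obtain ⟨B, hAB, hBκ⟩ := exists_between hA
      exact hAB.trans_le (hle B (hrκ.eventually_const_le hBκ))
    · obtain ⟨B, hκB, hBA⟩ := exists_between hA
      exact (hge B (hrκ.eventually_le_const hκB)).trans_lt hBA
  · have hr_top : Tendsto r l atTop :=
      hr.symm.tendsto_atTop (((tendsto_rpow_atTop hδ).comp hx).const_mul_atTop hκ)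
    linarith [hle (e + 1) (hr_top.eventually_ge_atTop (e + 1))]

theorem isEquivalent_fwdDiff_fwdDiff_log_div {u : ℕ → ℝ} {c e K D : ℝ} (hc : 0 < c)
    (hu : u ~[atTop] fun n => c * (n : ℝ) ^ e)
    (hΔ : (fun n => u (n + 1) ^ 2 - u n * u (n + 2)) ~[atTop]
      fun n => K * ((n + 1 : ℕ) : ℝ) ^ D) :
    Δ_[1] (Δ_[1] (Real.log ∘ u)) / Δ_[1] (Δ_[1] (Real.log ∘ ((↑) : ℕ → ℝ))) ~[atTop]
      fun n => K / c ^ 2 * ((n + 1 : ℕ) : ℝ) ^ (D - 2 * e + 2) := by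
  have hu_pos : ∀ᶠ n in atTop, 0 < u n := by
    refine hu.eventually_pos ?_
    filter_upwards [eventually_gt_atTop 0] with n hn
    positivity
  have hlog : Δ_[1] (Δ_[1] (Real.log ∘ u)) ~[atTop] fun n =>
      -(K * ((n + 1 : ℕ) : ℝ) ^ D) / (c * ((n + 1 : ℕ) : ℝ) ^ e) ^ 2 := by
    refine (isEquivalent_fwdDiff_fwdDiff_log hu_pos (tendsto_fwdDiff_zero_of_tendsto_sub_smul
      tendsto_fwdDiff_log_natCast (tendsto_log_sub_smul_log hc hu))).trans ?_
    exact (hΔ.neg.div ((hu.comp_tendsto (tendsto_add_atTop_nat 1)).pow 2)).congr_left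
      (.of_forall fun n => by simp)
  refine (hlog.div isEquivalent_fwdDiff_fwdDiff_log_natCast).congr_right (.of_forall fun n => ?_)
  have hn : (0 : ℝ) < (n + 1 : ℕ) := by positivity
  simp only [Pi.div_apply]
  rw [Real.rpow_add hn, Real.rpow_sub hn, mul_comm 2 e, Real.rpow_mul hn.le]
  simp only [Real.rpow_two]
  field_simp

theorem mul_sq_eq_of_isEquivalent_sq_sub_mul {u : ℕ → ℝ} {c e K D : ℝ} (he : 0 < e) (hc : 0 < c)
    (hK : 0 < K) (hu : u ~[atTop] fun n => c * (n : ℝ) ^ e)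
    (hΔ : (fun n => u (n + 1) ^ 2 - u n * u (n + 2)) ~[atTop]
      fun n => K * ((n + 1 : ℕ) : ℝ) ^ D) :
    e * c ^ 2 = K := by
  have hlog := tendsto_log_sub_smul_log hc hu
  have hφ : Tendsto (Real.log ∘ ((↑) : ℕ → ℝ)) atTop atTop :=
    Real.tendsto_log_atTop.comp tendsto_natCast_atTop_atTop
  have hφ_neg : ∀ᶠ n in atTop, Δ_[1] (Δ_[1] (Real.log ∘ ((↑) : ℕ → ℝ))) n < 0 :=
    isEquivalent_fwdDiff_fwdDiff_log_natCast.eventually_neg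
      (.of_forall fun n => div_neg_of_neg_of_pos neg_one_lt_zero (by positivity))
  have hκ : K / c ^ 2 = e := by
    refine eq_of_isEquivalent_const_mul_rpow
      (tendsto_natCast_atTop_atTop.comp (tendsto_add_atTop_nat 1)) (by positivity) he
      (isEquivalent_fwdDiff_fwdDiff_log_div hc hu hΔ) (fun A hA => ?_) fun A hA => ?_
    · refine le_of_fwdDiff_fwdDiff_le hφ tendsto_fwdDiff_log_natCast hlog ?_
      filter_upwards [hA, hφ_neg] with n hn hneg
      exact (le_div_iff_of_neg hneg).1 hn
    · refine le_of_le_fwdDiff_fwdDiff hφ tendsto_fwdDiff_log_natCast hlog ?_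
      filter_upwards [hA, hφ_neg] with n hn hneg
      exact (div_le_iff_of_neg hneg).1 hn
  rw [← hκ, div_mul_cancel₀ K (by positivity)]

theorem isEquivalent_of_forall_exists_eq {α ι E : Type*} [NormedAddCommGroup E] {l : Filter α}
    {s : Finset ι} {f : ι → α → E} {u v : α → E} (hf : ∀ i ∈ s, f i ~[l] v)
    (hu : ∀ x, ∃ i ∈ s, u x = f i x) : u ~[l] v := by
  refine isLittleO_iff.2 fun ε hε => ?_
  have hbound : ∀ᶠ x in l, ∀ i ∈ s, ‖(f i - v) x‖ ≤ ε * ‖v x‖ :=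
    (eventually_all_finset s).2 fun i hi => isLittleO_iff.1 (hf i hi) hε
  filter_upwards [hbound] with x hx
  obtain ⟨i, hi, hui⟩ := hu x
  simpa only [Pi.sub_apply, hui] using hx i hi

/-- `q` is a quasipolynomial of degree `e` with constant leading coefficient `c`: on each residue
class modulo some `ℓ ≥ 1` it is given by a polynomial of degree `e` and leading coefficient `c`.
Only the constituents `p j` with `0 ≤ j < ℓ` matter. -/
def IsQuasipolynomialWith (q : ℤ → ℝ) (e : ℕ) (c : ℝ) : Prop :=
  ∃ ℓ : ℕ, 1 ≤ ℓ ∧ ∃ p : ℤ → Polynomial ℝ,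
    (∀ j : ℤ, 0 ≤ j → j < (ℓ : ℤ) → (p j).natDegree = e ∧ (p j).coeff e = c) ∧
    ∀ m : ℤ, q m = (p (m % (ℓ : ℤ))).eval (m : ℝ)

theorem IsQuasipolynomialWith.isEquivalent {q : ℤ → ℝ} {e : ℕ} {c : ℝ}
    (hq : IsQuasipolynomialWith q e c) : q ~[atTop] fun m => c * (m : ℝ) ^ e := by
  obtain ⟨ℓ, hℓ, p, hp, hqp⟩ := hq
  refine isEquivalent_of_forall_exists_eq (s := Finset.Ico (0 : ℤ) ℓ)
    (f := fun j (m : ℤ) => (p j).eval (m : ℝ)) (fun j hj => ?_) fun m : ℤ => ⟨m % ℓ, ?_, hqp m⟩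
  · rw [Finset.mem_Ico] at hj
    obtain ⟨rfl, rfl⟩ := hp j hj.1 hj.2
    exact (p j).isEquivalent_atTop_lead.comp_tendsto tendsto_intCast_atTop_atTop
  · exact Finset.mem_Ico.2 ⟨Int.emod_nonneg _ (by omega), Int.emod_lt_of_pos _ (by omega)⟩

theorem floor_intCast_div_intCast {k : Type*} [Field k] [LinearOrder k] [IsStrictOrderedRing k]
    [FloorRing k] (z y : ℤ) : ⌊(z : k) / y⌋ = z.fdiv y := by
  rcases le_total 0 y with hy | hy
  · rw [Int.floor_div_cast_of_nonneg hy, Int.floor_intCast, Int.fdiv_eq_ediv_of_nonneg _ hy]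
  · rw [← neg_div_neg_eq, ← Int.cast_neg y, Int.floor_div_cast_of_nonneg (neg_nonneg.2 hy),
      ← Int.cast_neg, Int.floor_intCast, ← Int.neg_fdiv_neg,
      Int.fdiv_eq_ediv_of_nonneg _ (neg_nonneg.2 hy)]

theorem isEquivalent_int_floor : (fun x : ℝ => (⌊x⌋ : ℝ)) ~[atTop] id := by
  refine IsBigO.trans_isLittleO (.of_bound 1 (.of_forall fun x => ?_))
    (isLittleO_const_id_atTop (1 : ℝ))
  rw [norm_one, mul_one, Real.norm_eq_abs, abs_le, Pi.sub_apply, id_eq]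
  constructor <;> linarith [Int.floor_le x, Int.lt_floor_add_one x]

theorem isEquivalent_fdiv {x y : ℤ} (hxy : 0 < (x : ℝ) / y) (k : ℤ) :
    (fun m : ℤ => (Int.fdiv (x * m - k) y : ℝ)) ~[atTop] fun m => (x : ℝ) / y * m := by
  have hlin : Tendsto (fun m : ℤ => (x : ℝ) / y * m) atTop atTop :=
    tendsto_intCast_atTop_atTop.const_mul_atTop hxy
  have haff : (fun m : ℤ => ((x * m - k : ℤ) : ℝ) / y) ~[atTop] fun m => (x : ℝ) / y * m := by
    refine (IsEquivalent.refl.add_const_of_norm_tendsto_atTop (c := -(k / y : ℝ))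
      (tendsto_norm_atTop_atTop.comp hlin)).congr_left (.of_forall fun m => ?_)
    push_cast
    ring
  simpa only [Function.comp_def, floor_intCast_div_intCast] using!
    (isEquivalent_int_floor.comp_tendsto (haff.symm.tendsto_atTop hlin)).trans haff

theorem isEquivalent_comp_fdiv {q : ℤ → ℝ} {c e : ℝ}
    (hq : q ~[atTop] fun m => c * (m : ℝ) ^ e) {x y : ℤ} (hxy : 0 < (x : ℝ) / y) (k : ℤ) :
    (fun m => q (Int.fdiv (x * m - k) y)) ~[atTop]
      fun m => c * ((x : ℝ) / y) ^ e * (m : ℝ) ^ e := by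
  have hfdiv := isEquivalent_fdiv hxy k
  have htop : Tendsto (fun m : ℤ => Int.fdiv (x * m - k) y) atTop atTop :=
    tendsto_intCast_atTop_iff.1 (hfdiv.symm.tendsto_atTop
      (tendsto_intCast_atTop_atTop.const_mul_atTop hxy))
  have habs : ∀ᶠ m : ℤ in atTop, (m : ℝ) = |(m : ℝ)| := by
    filter_upwards [eventually_ge_atTop 0] with m hm
    exact (abs_of_nonneg (Int.cast_nonneg hm)).symm
  have hpow : (fun m : ℤ => (Int.fdiv (x * m - k) y : ℝ) ^ e) ~[atTop]
      fun m => ((x : ℝ) / y * |(m : ℝ)|) ^ e :=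
    IsEquivalent.rpow (fun m => by positivity)
      (hfdiv.congr_right (habs.mono fun m hm => congrArg ((x : ℝ) / y * ·) hm))
  refine (hq.comp_tendsto htop).trans ((IsEquivalent.refl.mul hpow).congr_right ?_)
  filter_upwards [habs] with m hm
  rw [Pi.mul_apply, Real.mul_rpow hxy.le (abs_nonneg _), ← hm, mul_assoc]

theorem isEquivalent_prod_prod_comp_fdiv {I : Type*} {s : Finset I} {q : I → ℤ → ℝ}
    {c e : I → ℝ} (hq : ∀ b ∈ s, q b ~[atTop] fun m => c b * (m : ℝ) ^ e b) {x y : I → ℤ}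
    (hxy : ∀ b ∈ s, 0 < (x b : ℝ) / y b) (N : I → ℕ) :
    (fun m : ℤ => ∏ b ∈ s, ∏ k ∈ Finset.range (N b), q b (Int.fdiv (x b * m - k) (y b)))
      ~[atTop] fun m => (∏ b ∈ s, (c b * ((x b : ℝ) / y b) ^ e b) ^ N b) *
        (m : ℝ) ^ ∑ b ∈ s, e b * N b := by
  refine (IsEquivalent.finsetProd fun b hb => IsEquivalent.finsetProd fun (k : ℕ) _ =>
    isEquivalent_comp_fdiv (hq b hb) (hxy b hb) k).congr_right ?_
  filter_upwards [eventually_gt_atTop 0] with m hm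
  have hm' : (0 : ℝ) < m := Int.cast_pos.2 hm
  rw [Real.rpow_sum_of_pos hm', ← Finset.prod_mul_distrib]
  refine Finset.prod_congr rfl fun b _ => ?_
  rw [Finset.prod_const, Finset.card_range, mul_pow, Real.rpow_mul_natCast hm'.le]

theorem stmt_11_general {I : Type*} {C : I → I → ℤ} {q : I → ℤ → ℝ} {c e : I → ℝ}
    (hc : ∀ b, 0 < c b) (hq : ∀ b, q b ~[atTop] fun m => c b * (m : ℝ) ^ e b)
    {a : I} (he : 0 < e a) {s : Finset I} (hs : ∀ b ∈ s, C a b < 0 ∧ C b a < 0)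
    (hQ : ∀ᶠ m : ℤ in atTop, q a m ^ 2 - q a (m + 1) * q a (m - 1) =
      ∏ b ∈ s, ∏ k ∈ Finset.range (-(C a b)).toNat,
        q b (Int.fdiv (C b a * m - (k : ℤ)) (C a b))) :
    e a * c a ^ 2 =
      ∏ b ∈ s, (c b * ((C b a : ℝ) / (C a b : ℝ)) ^ e b) ^ (-(C a b)).toNat := by
  have hratio : ∀ b ∈ s, 0 < (C b a : ℝ) / (C a b : ℝ) := fun b hb =>
    div_pos_of_neg_of_neg (Int.cast_lt_zero.2 (hs b hb).2) (Int.cast_lt_zero.2 (hs b hb).1)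
  have hpos : 0 < ∏ b ∈ s, (c b * ((C b a : ℝ) / (C a b : ℝ)) ^ e b) ^ (-(C a b)).toNat :=
    Finset.prod_pos fun b hb => pow_pos (mul_pos (hc b) (Real.rpow_pos_of_pos (hratio b hb) _)) _
  have hΔ := (isEquivalent_prod_prod_comp_fdiv (fun b _ => hq b) hratio
    fun b => (-(C a b)).toNat).congr_left (EventuallyEq.symm hQ)
  have hsucc : Tendsto (fun n : ℕ => ((n + 1 : ℕ) : ℤ)) atTop atTop :=
    tendsto_natCast_atTop_atTop.comp (tendsto_add_atTop_nat 1)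
  refine mul_sq_eq_of_isEquivalent_sq_sub_mul (u := fun n => q a n) he (hc a) hpos
    ((hq a).comp_tendsto tendsto_natCast_atTop_atTop)
    ((hΔ.comp_tendsto hsucc).congr_left (.of_forall fun n => ?_))
  simp [mul_comm, add_assoc, one_add_one_eq_two]

/-- Leading coefficients of a quasipolynomial solution of the Q-system.  `C` is a generalized Cartan
matrix on a finite set `I`; `(q a)` is a family of quasipolynomials (each given piecewise
by polynomial constituents of degree `e a` with constant leading coefficient `c a > 0`)
satisfying the Q-system.  Then the leading coefficients satisfy
`e a · (c a)² = ∏_{b : C a b < 0} (c b · (C b a / C a b)^(e b))^(−C a b)`. -/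
theorem stmt_11 {I : Type*} [Fintype I] [DecidableEq I]
    (C : I → I → ℤ)
    (hdiag : ∀ a, C a a = 2)
    (hoff : ∀ a b, a ≠ b → C a b ≤ 0)
    (hsymzero : ∀ a b, (C a b < 0 ↔ C b a < 0))
    (q : I → ℤ → ℝ) (e : I → ℕ) (c : I → ℝ)
    (he : ∀ a, 1 ≤ e a) (hc : ∀ a, 0 < c a)
    (hqp : ∀ a, ∃ ℓ : ℕ, 1 ≤ ℓ ∧ ∃ p : ℤ → Polynomial ℝ,
      (∀ j : ℤ, 0 ≤ j → j < (ℓ : ℤ) →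
        (p j).natDegree = e a ∧ (p j).coeff (e a) = c a) ∧
      (∀ m : ℤ, q a m = (p (m % (ℓ : ℤ))).eval (m : ℝ)))
    (hQ : ∀ a, ∀ m : ℤ,
      q a m ^ 2 - q a (m + 1) * q a (m - 1) =
        ∏ b ∈ Finset.univ.filter (fun b => C a b < 0),
          ∏ k ∈ Finset.range (-(C a b)).toNat,
            q b (Int.fdiv (C b a * m - (k : ℤ)) (C a b))) :
    (∀ a : I, (e a : ℝ) * (c a) ^ 2 =
      ∏ b ∈ Finset.univ.filter (fun b => C a b < 0),
        (c b * ((C b a : ℝ) / (C a b : ℝ)) ^ (e b)) ^ (-(C a b)).toNat) := by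
  intro a
  have hq : ∀ b, q b ~[atTop] fun m => c b * (m : ℝ) ^ (e b : ℝ) := fun b => by
    simpa only [Real.rpow_natCast] using IsQuasipolynomialWith.isEquivalent (hqp b)
  have hs : ∀ b ∈ Finset.univ.filter (fun b => C a b < 0), C a b < 0 ∧ C b a < 0 := fun b hb =>
    have hab := (Finset.mem_filter.1 hb).2
    ⟨hab, (hsymzero a b).1 hab⟩
  simpa only [Real.rpow_natCast] using
    stmt_11_general hc hq (Nat.cast_pos.2 (he a)) hs (.of_forall (hQ a))
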